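/- Let N = 2^v r, where v > 0 and r is an odd prime such that 2 is a primitive root modulo r, and suppose 2^v < r - 1. Let 1 ≤ k ≤ N and let S be an N-periodic binary sequence such that L(S) = N - c ≥ L_{N,k}(S) = N - r + 1 for some positive integer c. Then there exist an integer m ≤ k and an N-periodic binary sequence E of Hamming weight m with support contained in {0, 1, ..., r - 1} such that L(S + E) = L_{N,k}(S); in particular L_{N,k}(S) = L_{N,k;r}(S). -/

import Mathlib

/-- Generating polynomial `S^N(x) = s_0 + s_1 x + ... + s_{N-1} x^{N-1}` of one period
of an `N`-periodic binary sequence. -/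
noncomputable def genPoly {N : ℕ} (S : Fin N → ZMod 2) : Polynomial (ZMod 2) :=
  ∑ i : Fin N, Polynomial.C (S i) * Polynomial.X ^ (i : ℕ)

/-- Linear complexity `L(S) = N - deg (gcd (1 - x^N, S^N(x)))`. -/
noncomputable def linComp {N : ℕ} (S : Fin N → ZMod 2) : ℕ :=
  N - (EuclideanDomain.gcd (1 - Polynomial.X ^ N) (genPoly S)).natDegree

/-- Hamming weight of one period of an `N`-periodic binary sequence. -/
def wt {N : ℕ} (T : Fin N → ZMod 2) : ℕ :=
  (Finset.univ.filter (fun i => T i ≠ 0)).card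

/-- `k`-error linear complexity `L_{N,k}(S)`. -/
noncomputable def errLC {N : ℕ} (S : Fin N → ZMod 2) (k : ℕ) : ℕ :=
  sInf {c | ∃ T : Fin N → ZMod 2, wt T ≤ k ∧ linComp (S + T) = c}

/-- `k`-error linear complexity with a zone of length `Z`: `L_{N,k;Z}(S)`. -/
noncomputable def errLCZone {N : ℕ} (S : Fin N → ZMod 2) (k Z : ℕ) : ℕ :=
  sInf {c | ∃ T : Fin N → ZMod 2, wt T ≤ k ∧ (∀ i : Fin N, Z ≤ (i : ℕ) → T i = 0) ∧
    linComp (S + T) = c}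

/-- `E_1(j)`: the sequence whose only nonzero term in one period is a `1` at position `j`. -/
def E1 {N : ℕ} (j : Fin N) : Fin N → ZMod 2 :=
  fun i => if i = j then 1 else 0

/-!
Let `Φ` be the `r`-th cyclotomic polynomial over `𝔽₂`. It is irreducible because `2` is a primitive
root modulo `r`, and `1 - x^N = (x^r - 1)^(2^v)`. The cofactor of the `Φ`-part of `1 - x^N` has
degree `2^v (r - φ(r)) < φ(r) = deg Φ`, so a sequence has linear complexity at most `N - φ(r)`
exactly when `Φ` divides its generating polynomial. Reducing the positions of an error vector
modulo `r` changes its generating polynomial by a multiple of `x^r - 1`, hence of `Φ`, and does not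
increase its weight.
-/

section Algebra

open Polynomial

theorem pow_sub_one_dvd_pow_sub_pow_mod {R : Type*} [CommRing R] (x : R) (r n : ℕ) :
    x ^ r - 1 ∣ x ^ n - x ^ (n % r) := by
  have factor : x ^ n - x ^ (n % r) = x ^ (n % r) * ((x ^ r) ^ (n / r) - 1) := by
    rw [mul_sub, ← pow_mul, ← pow_add, Nat.mod_add_div, mul_one]
  rw [factor]
  exact (sub_one_dvd_pow_sub_one _ _).mul_left _

theorem irreducible_cyclotomic_of_orderOf_eq_totient {p n : ℕ} [Fact p.Prime] (hn : 0 < n)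
    (hord : orderOf (p : ZMod n) = n.totient) : Irreducible (cyclotomic n (ZMod p)) := by
  have hfin : IsOfFinOrder (p : ZMod n) :=
    orderOf_pos_iff.mp (hord ▸ Nat.totient_pos.mpr hn)
  have hcop : p.Coprime n := (ZMod.isUnit_iff_coprime p n).mp hfin.isUnit
  refine ZMod.irreducible_of_dvd_cyclotomic_of_natDegree
    ((Fact.out : p.Prime).coprime_iff_not_dvd.mp hcop) dvd_rfl ?_
  rw [natDegree_cyclotomic, ← hord, ← orderOf_units, ZMod.coe_unitOfCoprime]

variable {K : Type*} [Field K]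

theorem dvd_of_irreducible_of_dvd_mul_pow {f g q : K[X]} {n : ℕ} (hf : Irreducible f) (hq : q ≠ 0)
    (hg : g ∣ (f * q) ^ n) (hdeg : n * q.natDegree < g.natDegree) : f ∣ g := by
  by_contra hfg
  have hcop : IsCoprime g (f ^ n) := ((hf.coprime_iff_not_dvd.mpr hfg).pow_left).symm
  have hgq : g ∣ q ^ n := hcop.dvd_of_dvd_mul_left (mul_pow f q n ▸ hg)
  have hle : g.natDegree ≤ n * q.natDegree :=
    natDegree_pow q n ▸ natDegree_le_of_dvd hgq (pow_ne_zero n hq)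
  exact hdeg.not_ge hle

theorem cyclotomic_dvd_of_dvd_X_pow_sub_one {p v r : ℕ} [Fact p.Prime] [CharP K p] {g : K[X]}
    (hirr : Irreducible (cyclotomic r K)) (hg : g ∣ X ^ (p ^ v * r) - 1)
    (hdeg : p ^ v * (r - r.totient) < g.natDegree) : cyclotomic r K ∣ g := by
  have hr : 0 < r := by
    rw [Nat.pos_iff_ne_zero]
    rintro rfl
    simp at hirr
  obtain ⟨q, hq⟩ := cyclotomic.dvd_X_pow_sub_one r K
  have hq0 : q ≠ 0 := right_ne_zero_of_mul (hq ▸ X_pow_sub_C_ne_zero hr (1 : K))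
  have hqdeg : q.natDegree = r - r.totient := by
    have hsum := congrArg natDegree hq
    rw [natDegree_mul hirr.ne_zero hq0, natDegree_cyclotomic, ← C_1, natDegree_X_pow_sub_C] at hsum
    lia
  have hpow : (X ^ (p ^ v * r) - 1 : K[X]) = (cyclotomic r K * q) ^ p ^ v := by
    rw [← hq, sub_pow_char_pow, one_pow, ← pow_mul, mul_comm r]
  exact dvd_of_irreducible_of_dvd_mul_pow hirr hq0 (hpow ▸ hg) (hqdeg ▸ hdeg)

end Algebra

section LinearComplexity

open Polynomial

variable {N : ℕ}

theorem genPoly_add (S T : Fin N → ZMod 2) : genPoly (S + T) = genPoly S + genPoly T := by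
  simp [genPoly, add_mul, Finset.sum_add_distrib]

theorem linComp_le_sub_natDegree {S : Fin N → ZMod 2} {f : (ZMod 2)[X]}
    (hfN : f ∣ X ^ N - 1) (hfS : f ∣ genPoly S) : linComp S ≤ N - f.natDegree := by
  rcases N.eq_zero_or_pos with rfl | hN
  · simp [linComp]
  have hN0 : (1 - X ^ N : (ZMod 2)[X]) ≠ 0 :=
    sub_ne_zero.mpr (sub_ne_zero.mp (X_pow_sub_C_ne_zero hN 1)).symm
  have hgcd0 : EuclideanDomain.gcd (1 - X ^ N) (genPoly S) ≠ 0 :=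
    ne_zero_of_dvd_ne_zero hN0 (EuclideanDomain.gcd_dvd_left _ _)
  have hfgcd := EuclideanDomain.dvd_gcd (dvd_sub_comm.mp hfN) hfS
  exact Nat.sub_le_sub_left (natDegree_le_of_dvd hfgcd hgcd0) N

theorem linComp_le_iff_cyclotomic_dvd {v r : ℕ} (hirr : Irreducible (cyclotomic r (ZMod 2)))
    (hvr : 2 ^ v * (r - r.totient) < r.totient) (S : Fin (2 ^ v * r) → ZMod 2) :
    linComp S ≤ 2 ^ v * r - r.totient ↔ cyclotomic r (ZMod 2) ∣ genPoly S := by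
  constructor
  · intro hL
    have htot : r.totient ≤ 2 ^ v * r :=
      r.totient_le.trans (Nat.le_mul_of_pos_left r (Nat.two_pow_pos v))
    have hdeg : r.totient ≤ (EuclideanDomain.gcd (1 - X ^ (2 ^ v * r)) (genPoly S)).natDegree := by
      unfold linComp at hL
      lia
    have hgcd := EuclideanDomain.gcd_dvd_left (1 - X ^ (2 ^ v * r)) (genPoly S)
    exact (cyclotomic_dvd_of_dvd_X_pow_sub_one hirr (dvd_sub_comm.mp hgcd)
      (hvr.trans_le hdeg)).trans (EuclideanDomain.gcd_dvd_right _ _)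
  · intro hS
    have hdvd : cyclotomic r (ZMod 2) ∣ X ^ (2 ^ v * r) - 1 :=
      (cyclotomic.dvd_X_pow_sub_one r _).trans (dvd_pow_sub_one_of_dvd (dvd_mul_left r _))
    simpa only [natDegree_cyclotomic] using linComp_le_sub_natDegree hdvd hS

end LinearComplexity

section ErrorLinearComplexity

variable {N : ℕ}

theorem wt_zero : wt (0 : Fin N → ZMod 2) = 0 := by
  simp [wt]

theorem exists_linComp_add_eq_errLC (S : Fin N → ZMod 2) (k : ℕ) :
    ∃ T : Fin N → ZMod 2, wt T ≤ k ∧ linComp (S + T) = errLC S k :=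
  Nat.sInf_mem (s := {c | ∃ T : Fin N → ZMod 2, wt T ≤ k ∧ linComp (S + T) = c})
    ⟨_, 0, wt_zero.trans_le k.zero_le, rfl⟩

theorem errLC_le_linComp_add (S : Fin N → ZMod 2) {T : Fin N → ZMod 2} {k : ℕ} (hT : wt T ≤ k) :
    errLC S k ≤ linComp (S + T) :=
  Nat.sInf_le ⟨T, hT, rfl⟩

theorem errLCZone_le_linComp_add (S : Fin N → ZMod 2) {T : Fin N → ZMod 2} {k Z : ℕ}
    (hT : wt T ≤ k) (hsupp : ∀ i : Fin N, T i ≠ 0 → (i : ℕ) < Z) :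
    errLCZone S k Z ≤ linComp (S + T) :=
  Nat.sInf_le ⟨T, hT, fun i hi => not_not.mp fun hne => (hsupp i hne).not_ge hi, rfl⟩

theorem errLC_le_errLCZone (S : Fin N → ZMod 2) (k Z : ℕ) : errLC S k ≤ errLCZone S k Z :=
  le_csInf ⟨_, 0, wt_zero.trans_le k.zero_le, fun _ _ => rfl, rfl⟩ <| by
    rintro _ ⟨T, hT, -, rfl⟩
    exact errLC_le_linComp_add S hT

end ErrorLinearComplexity

section Folding

open Polynomial

variable {N : ℕ}

/-- The position `j mod r`, as an element of the same `Fin N` as `j` even when `r < N`. -/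
def modPosition (r : ℕ) (j : Fin N) : Fin N :=
  ⟨j % r, (Nat.mod_le _ _).trans_lt j.isLt⟩

/-- The folding of one period `T` modulo `r`: the term at `i < r` is the sum of the terms of `T` at
the positions congruent to `i`, and the other terms vanish. It represents the class of the
generating polynomial of `T` modulo `x^r - 1`, padded to length `N`. -/
def foldMod (r : ℕ) (T : Fin N → ZMod 2) (i : Fin N) : ZMod 2 :=
  ∑ j with modPosition r j = i, T j

theorem exists_modPosition_eq_of_foldMod_ne_zero {r : ℕ} {T : Fin N → ZMod 2} {i : Fin N}
    (hi : foldMod r T i ≠ 0) : ∃ j, T j ≠ 0 ∧ modPosition r j = i := by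
  obtain ⟨j, hj, hTj⟩ := Finset.exists_ne_zero_of_sum_ne_zero hi
  exact ⟨j, hTj, (Finset.mem_filter.mp hj).2⟩

theorem wt_foldMod_le (r : ℕ) (T : Fin N → ZMod 2) : wt (foldMod r T) ≤ wt T := by
  refine (Finset.card_le_card fun i hi => ?_).trans (Finset.card_image_le (f := modPosition r))
  simpa using exists_modPosition_eq_of_foldMod_ne_zero (Finset.mem_filter.mp hi).2

theorem lt_of_foldMod_ne_zero {r : ℕ} (hr : 0 < r) {T : Fin N → ZMod 2} {i : Fin N}
    (hi : foldMod r T i ≠ 0) : (i : ℕ) < r := by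
  obtain ⟨j, -, rfl⟩ := exists_modPosition_eq_of_foldMod_ne_zero hi
  exact Nat.mod_lt _ hr

theorem genPoly_foldMod (r : ℕ) (T : Fin N → ZMod 2) :
    genPoly (foldMod r T) = ∑ j : Fin N, C (T j) * X ^ ((j : ℕ) % r) := by
  calc
    genPoly (foldMod r T)
      = ∑ i, ∑ j with modPosition r j = i, C (T j) * X ^ (i : ℕ) := by
        simp only [genPoly, foldMod, map_sum, Finset.sum_mul]
    _ = ∑ i, ∑ j with modPosition r j = i, C (T j) * X ^ ((j : ℕ) % r) :=
        Finset.sum_congr rfl fun i _ => Finset.sum_congr rfl fun j hj => by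
          rw [← (Finset.mem_filter.mp hj).2, modPosition]
    _ = ∑ j : Fin N, C (T j) * X ^ ((j : ℕ) % r) := Finset.sum_fiberwise _ _ _

theorem X_pow_sub_one_dvd_genPoly_sub_genPoly_foldMod (r : ℕ) (T : Fin N → ZMod 2) :
    X ^ r - 1 ∣ genPoly T - genPoly (foldMod r T) := by
  rw [genPoly_foldMod, genPoly, ← Finset.sum_sub_distrib]
  refine Finset.dvd_sum fun j _ => ?_
  rw [← mul_sub]
  exact (pow_sub_one_dvd_pow_sub_pow_mod X r j).mul_left _

theorem dvd_genPoly_add_foldMod_iff {r : ℕ} {f : (ZMod 2)[X]} (hf : f ∣ X ^ r - 1)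
    (S T : Fin N → ZMod 2) : f ∣ genPoly (S + foldMod r T) ↔ f ∣ genPoly (S + T) := by
  refine (dvd_iff_dvd_of_dvd_sub ?_).symm
  rw [genPoly_add, genPoly_add, add_sub_add_left_eq_sub]
  exact hf.trans (X_pow_sub_one_dvd_genPoly_sub_genPoly_foldMod r T)

end Folding

/-- For a prime power `r = p^e` the bound `hvr` says `2^v < p - 1`. -/
theorem stmt17_general (v r k : ℕ) (hprim : orderOf (2 : ZMod r) = r.totient)
    (hvr : 2 ^ v * (r - r.totient) < r.totient) (S : Fin (2 ^ v * r) → ZMod 2)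
    (hEq : errLC S k = 2 ^ v * r - r.totient) :
    (∃ m ≤ k, ∃ E : Fin (2 ^ v * r) → ZMod 2, wt E = m ∧
      (∀ i : Fin (2 ^ v * r), E i ≠ 0 → (i : ℕ) < r) ∧
      linComp (S + E) = errLC S k) ∧
    errLC S k = errLCZone S k r := by
  have hr : 0 < r := Nat.totient_pos.mp (Nat.zero_lt_of_lt hvr)
  have hirr : Irreducible (Polynomial.cyclotomic r (ZMod 2)) :=
    irreducible_cyclotomic_of_orderOf_eq_totient hr hprim
  obtain ⟨T, hT, hTL⟩ := exists_linComp_add_eq_errLC S k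
  have hE : wt (foldMod r T) ≤ k := (wt_foldMod_le r T).trans hT
  have hsupp : ∀ i, foldMod r T i ≠ 0 → (i : ℕ) < r := fun _ => lt_of_foldMod_ne_zero hr
  have hEle : linComp (S + foldMod r T) ≤ errLC S k := by
    rw [hEq, linComp_le_iff_cyclotomic_dvd hirr hvr,
      dvd_genPoly_add_foldMod_iff (Polynomial.cyclotomic.dvd_X_pow_sub_one r _),
      ← linComp_le_iff_cyclotomic_dvd hirr hvr, hTL, hEq]
  have hEL : linComp (S + foldMod r T) = errLC S k := hEle.antisymm (errLC_le_linComp_add S hE)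
  exact ⟨⟨_, hE, foldMod r T, rfl, hsupp, hEL⟩,
    (errLC_le_errLCZone S k r).antisymm (hEL ▸ errLCZone_le_linComp_add S hE hsupp)⟩

/-- For `N = 2^v r`, `2^v < r - 1`, `2` primitive mod the odd prime `r`, and
`L(S) = N - c ≥ L_{N,k}(S) = N - r + 1`: an error vector reaching `L_{N,k}(S)`
exists with support in `[0, r)`; in particular `L_{N,k}(S) = L_{N,k;r}(S)`. -/
theorem stmt17 (v r k c : ℕ) (hv : 0 < v) (hr : r.Prime) (hodd : Odd r)
    (hprim : orderOf (2 : ZMod r) = r - 1) (hvr : 2^v < r - 1)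
    (hk1 : 1 ≤ k) (hk : k ≤ 2^v * r) (hc : 0 < c)
    (S : Fin (2^v * r) → ZMod 2)
    (hLS : linComp S = 2^v * r - c)
    (hge : errLC S k ≤ linComp S)
    (hEq : errLC S k = 2^v * r - r + 1) :
    (∃ m ≤ k, ∃ E : Fin (2^v * r) → ZMod 2, wt E = m ∧
      (∀ i : Fin (2^v * r), E i ≠ 0 → (i : ℕ) < r) ∧
      linComp (S + E) = errLC S k) ∧
    errLC S k = errLCZone S k r := by
  have hrN : r ≤ 2 ^ v * r := Nat.le_mul_of_pos_left r (Nat.two_pow_pos v)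
  have htot : r.totient = r - 1 := Nat.totient_prime hr
  have hcofactor : r - r.totient = 1 := by have := hr.pos; lia
  exact stmt17_general v r k (htot ▸ hprim) (by rwa [hcofactor, mul_one, htot]) S
    (by have := hr.pos; lia)
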